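/- Let p ≥ 5 and let B_{2p+2} be the braid group with Artin generators σ_1,…,σ_{2p+1}. Then σ_1^{−1}·(∏_{i=4}^{p−1} (σ_3σ_4⋯σ_{2(p−i)+2})(σ_1σ_2⋯σ_{2(p−i)+1}))·σ_1 = (σ_3σ_5σ_7⋯σ_{2p−7})·σ_1^{−1}·(∏_{i=4}^{p−1} (σ_4σ_5⋯σ_{2(p−i)+2})(σ_1σ_2⋯σ_{2(p−i)+1}))·σ_1, where both products over i are taken in increasing order of i, and for i = p−1 the block (σ_4⋯σ_{2(p−i)+2}) is the single generator σ_4. -/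

import Mathlib

/-- The Artin braid relations on `m` generators (generator `i : Fin m`
    represents the Artin generator `σ_{i+1}`). -/
def braidRels (m : ℕ) : Set (FreeGroup (Fin m)) :=
  {r | (∃ i j : Fin m, (i : ℕ) + 2 ≤ (j : ℕ) ∧
        r = FreeGroup.of i * FreeGroup.of j * (FreeGroup.of i)⁻¹ * (FreeGroup.of j)⁻¹) ∨
      (∃ i j : Fin m, (j : ℕ) = (i : ℕ) + 1 ∧
        r = FreeGroup.of i * FreeGroup.of j * FreeGroup.of i *
            (FreeGroup.of j * FreeGroup.of i * FreeGroup.of j)⁻¹)}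

/-- The braid group on `n` strands, presented by the Artin generators
    `σ_1, …, σ_{n-1}` and the braid relations. -/
def BraidGroup (n : ℕ) : Type := PresentedGroup (braidRels (n - 1))

instance (n : ℕ) : Group (BraidGroup n) :=
  inferInstanceAs (Group (PresentedGroup (braidRels (n - 1))))

/-- The Artin generator `σ_i` of `BraidGroup n` (1-based: `1 ≤ i ≤ n-1`);
    out-of-range indices give the identity. -/
def σ (n i : ℕ) : BraidGroup n :=
  if h : 1 ≤ i ∧ i ≤ n - 1 then
    (PresentedGroup.of ⟨i - 1, by omega⟩ : PresentedGroup (braidRels (n - 1)))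
  else 1

/-- The ascending product of generators `σ_a σ_{a+1} ⋯ σ_b` in `B_n`. -/
def asc (n a b : ℕ) : BraidGroup n :=
  ((List.range (b + 1 - a)).map (fun t => σ n (a + t))).prod

/-- generator, as an element of the braid group -/
def bgGen (n i : ℕ) (h : i - 1 < n - 1) : BraidGroup n :=
  (PresentedGroup.of ⟨i - 1, h⟩ : PresentedGroup (braidRels (n - 1)))

theorem σ_pos (n i : ℕ) (h : 1 ≤ i ∧ i ≤ n - 1) : σ n i = bgGen n i (by omega) := dif_pos h

theorem σ_neg (n i : ℕ) (h : ¬ (1 ≤ i ∧ i ≤ n - 1)) : σ n i = 1 := dif_neg h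

theorem bg_comm (n i j : ℕ) (h : i + 2 ≤ j) : σ n i * σ n j = σ n j * σ n i := by
  by_cases h1 : 1 ≤ i ∧ i ≤ n - 1
  · by_cases h2 : 1 ≤ j ∧ j ≤ n - 1
    · rw [σ_pos n i h1, σ_pos n j h2]
      have hr : (PresentedGroup.mk (braidRels (n - 1)))
          (FreeGroup.of ⟨i - 1, by omega⟩ * FreeGroup.of ⟨j - 1, by omega⟩ *
            (FreeGroup.of ⟨i - 1, by omega⟩)⁻¹ * (FreeGroup.of ⟨j - 1, by omega⟩)⁻¹) = 1 := by
        apply PresentedGroup.one_of_mem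
        left
        exact ⟨⟨i - 1, by omega⟩, ⟨j - 1, by omega⟩, by simp only []; omega, rfl⟩
      rw [map_mul, map_mul, map_mul, map_inv, map_inv, mul_inv_eq_one, mul_inv_eq_iff_eq_mul] at hr
      exact hr
    · rw [σ_neg n j h2, mul_one, one_mul]
  · rw [σ_neg n i h1, mul_one, one_mul]

theorem bg_braid (n i : ℕ) (h : 1 ≤ i) (h' : i + 1 ≤ n - 1) :
    σ n i * σ n (i + 1) * σ n i = σ n (i + 1) * σ n i * σ n (i + 1) := by
  rw [σ_pos n i (by omega), σ_pos n (i + 1) (by omega)]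
  have hr : (PresentedGroup.mk (braidRels (n - 1)))
      (FreeGroup.of ⟨i - 1, by omega⟩ * FreeGroup.of ⟨i + 1 - 1, by omega⟩ *
        FreeGroup.of ⟨i - 1, by omega⟩ * (FreeGroup.of ⟨i + 1 - 1, by omega⟩ *
        FreeGroup.of ⟨i - 1, by omega⟩ * FreeGroup.of ⟨i + 1 - 1, by omega⟩)⁻¹) = 1 := by
    apply PresentedGroup.one_of_mem
    right
    exact ⟨⟨i - 1, by omega⟩, ⟨i + 1 - 1, by omega⟩, by simp only []; omega, rfl⟩
  rw [map_mul, map_inv, mul_inv_eq_one] at hr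
  simp only [map_mul] at hr
  exact hr

/-- ascending product with given length -/
def bgG (n a l : ℕ) : BraidGroup n := ((List.range l).map (fun t => σ n (a + t))).prod

theorem bgG_succ (n a l : ℕ) : bgG n a (l + 1) = bgG n a l * σ n (a + l) := by
  simp [bgG, List.range_succ]

theorem bgG_succ' (n a l : ℕ) : bgG n a (l + 1) = σ n a * bgG n (a + 1) l := by
  simp only [bgG, List.range_succ_eq_map, List.map_cons, List.prod_cons, List.map_map, add_zero]
  congr 3
  funext t
  simp only [Function.comp]
  congr 1
  omega

theorem bgG_comm (n a l j : ℕ) (h : a + l + 1 ≤ j) : bgG n a l * σ n j = σ n j * bgG n a l := by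
  induction l with
  | zero => simp [bgG]
  | succ l ih =>
    rw [bgG_succ, mul_assoc, bg_comm n (a + l) j (by omega), ← mul_assoc, ih (by omega), mul_assoc]

theorem bgG_shift (n a l j : ℕ) (ha : 1 ≤ a) (hn : a + l ≤ n) (h1 : a ≤ j) (h2 : j + 1 < a + l) :
    bgG n a l * σ n j = σ n (j + 1) * bgG n a l := by
  induction l with
  | zero => omega
  | succ l ih =>
    by_cases hj : j + 1 < a + l
    · rw [bgG_succ, mul_assoc, ← bg_comm n j (a + l) (by omega), ← mul_assoc,
        ih (by omega) hj, mul_assoc]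
    · obtain ⟨k, rfl⟩ : ∃ k, l = k + 1 := ⟨l - 1, by omega⟩
      obtain rfl : j = a + k := by omega
      have hb := bg_braid n (a + k) (by omega) (by omega)
      rw [bgG_succ, bgG_succ, ← add_assoc, mul_assoc, mul_assoc, ← mul_assoc (σ n (a + k)), hb,
        ← mul_assoc, ← mul_assoc, bgG_comm n a k (a + k + 1) (by omega)]
      simp only [mul_assoc]

/-- the block `X_k` -/
def bgX (n k : ℕ) : BraidGroup n := asc n 4 (2 * k + 2) * asc n 1 (2 * k + 1)

theorem bgX_shift (n k j : ℕ) (hn : 2 * k + 3 ≤ n) (h1 : 3 ≤ j) (h2 : j ≤ 2 * k) :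
    bgX n k * σ n j = σ n (j + 2) * bgX n k := by
  have e1 : asc n 1 (2 * k + 1) * σ n j = σ n (j + 1) * asc n 1 (2 * k + 1) :=
    bgG_shift n 1 _ j (by omega) (by omega) (by omega) (by omega)
  have e2 : asc n 4 (2 * k + 2) * σ n (j + 1) = σ n (j + 2) * asc n 4 (2 * k + 2) :=
    bgG_shift n 4 _ (j + 1) (by omega) (by omega) (by omega) (by omega)
  rw [bgX, mul_assoc, e1, ← mul_assoc, e2, mul_assoc]

theorem asc_three (n k : ℕ) (hk : 1 ≤ k) :
    asc n 3 (2 * k + 2) = σ n 3 * asc n 4 (2 * k + 2) := by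
  have := bgG_succ' n 3 (2 * k + 2 + 1 - 4)
  rw [show 2 * k + 2 + 1 - 4 + 1 = 2 * k + 2 + 1 - 3 by omega] at this
  exact this

theorem bgX_odd (n k m : ℕ) (hn : 2 * k + 3 ≤ n) (hm : m + 1 ≤ k) :
    bgX n k * ((List.range m).map (fun t => σ n (3 + 2 * t))).prod =
      ((List.range m).map (fun t => σ n (3 + 2 * (t + 1)))).prod * bgX n k := by
  induction m with
  | zero => simp
  | succ m ih =>
    simp only [List.range_succ, List.map_append, List.prod_append, List.map_cons, List.map_nil,
      List.prod_cons, List.prod_nil, mul_one]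
    rw [← mul_assoc, ih (by omega), mul_assoc, bgX_shift n k _ hn (by omega) (by omega), mul_assoc]
    rfl

theorem bg_main (n m : ℕ) (hn : 2 * m + 3 ≤ n) :
    ((List.range m).map (fun t => asc n 3 (2 * (m - t) + 2) * asc n 1 (2 * (m - t) + 1))).prod =
    ((List.range m).map (fun t => σ n (3 + 2 * t))).prod *
      ((List.range m).map (fun t => asc n 4 (2 * (m - t) + 2) * asc n 1 (2 * (m - t) + 1))).prod := by
  induction m with
  | zero => simp
  | succ m ih =>
    have ih := ih (by omega)
    have hX := bgX_odd n (m + 1) m hn (by omega)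
    have h3 := asc_three n (m + 1) (by omega)
    simp only [List.range_succ_eq_map, List.map_cons, List.prod_cons, List.map_map,
      Function.comp_def, Nat.succ_eq_add_one, Nat.add_sub_add_right, Nat.sub_zero, mul_zero,
      add_zero]
    rw [ih, h3]
    rw [bgX] at hX
    rw [mul_assoc (σ n 3), mul_assoc (σ n 3), mul_assoc (σ n 3), ← mul_assoc (_ * _), hX, mul_assoc]

theorem bg_one_comm (n m : ℕ) :
    Commute (σ n 1) ((List.range m).map (fun t => σ n (3 + 2 * t))).prod := by
  apply Commute.list_prod_right
  intro x hx
  obtain ⟨t, -, rfl⟩ := List.mem_map.1 hx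
  exact bg_comm n 1 _ (by omega)

/-- Formula (∗), second equality: in `B_{2p+2}` with `p ≥ 5`,
`σ_1⁻¹ (∏_{i=4}^{p-1} (σ_3⋯σ_{2(p-i)+2})(σ_1⋯σ_{2(p-i)+1})) σ_1
  = (σ_3σ_5σ_7⋯σ_{2p-7}) σ_1⁻¹ (∏_{i=4}^{p-1} (σ_4⋯σ_{2(p-i)+2})(σ_1⋯σ_{2(p-i)+1})) σ_1`,
both products over `i` being taken in increasing order (for `i = p-1` the block
`σ_4⋯σ_{2(p-i)+2}` is the single generator `σ_4`). -/
theorem rho_check_formula' (p : ℕ) (hp : 5 ≤ p) :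
    (σ (2 * p + 2) 1)⁻¹ *
      ((List.range (p - 4)).map (fun t =>
        asc (2 * p + 2) 3 (2 * (p - (4 + t)) + 2) *
        asc (2 * p + 2) 1 (2 * (p - (4 + t)) + 1))).prod *
      σ (2 * p + 2) 1 =
    ((List.range (p - 4)).map (fun t => σ (2 * p + 2) (3 + 2 * t))).prod *
      ((σ (2 * p + 2) 1)⁻¹ *
        ((List.range (p - 4)).map (fun t =>
          asc (2 * p + 2) 4 (2 * (p - (4 + t)) + 2) *
          asc (2 * p + 2) 1 (2 * (p - (4 + t)) + 1))).prod *
        σ (2 * p + 2) 1) := by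
  obtain ⟨m, rfl⟩ : ∃ m, p = m + 4 := ⟨p - 4, by omega⟩
  have e : ∀ t, m + 4 - (4 + t) = m - t := fun t => by omega
  simp only [e, Nat.add_sub_cancel]
  rw [bg_main _ m (by omega)]
  have hc := (bg_one_comm (2 * (m + 4) + 2) m).inv_left.eq
  rw [← mul_assoc, hc]
  simp only [mul_assoc]
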